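/- arXiv:2202.11747 — 3 statements merged into one kernel-verified Lean document; each statement's English description precedes it below -/
import Mathlib

section
/- Let s ≥ 1 be an integer and f : ℝ → ℝ be s-times continuously differentiable with f^{(j)} bounded on ℝ for every 0 ≤ j ≤ s, and with f^{(s)} uniformly continuous on ℝ. Let k : ℝ → ℝ be integrable with ∫_ℝ k(z) dz = 1, ∫_ℝ z^j k(z) dz = 0 for j = 1, …, s, and ∫_ℝ |z|^s |k(z)| dz < ∞. Then lim_{h → 0⁺} h^{−s} · sup_{u ∈ ℝ} | ∫_ℝ k(z) f(u + hz) dz − f(u) | = 0; that is, the kernel-smoothing bias of f is uniformly o(h^s). -/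
open MeasureTheory Set

/-!
Write `f (u + h z)` as its Taylor polynomial of order `s` at `u` plus a remainder. The vanishing
moments of `k` reduce the integral of the polynomial part to `f u`. By uniform continuity of
`f⁽ˢ⁾` the remainder is, for each fixed `z`, `o(hˢ)` uniformly in `u`; as `f⁽ˢ⁾` is bounded, it is
also at most a multiple of `|h z|ˢ`. Uniformity in `u` is convergence of the pair `(h, u)` along the
countably generated filter `𝓝 0 ×ˢ ⊤`, so dominated convergence along that filter yields the
uniform estimate in one stroke.
-/

open Filter Asymptotics
open scoped Topology Nat

section SmoothingBias

variable {E : Type*} [NormedAddCommGroup E] [NormedSpace ℝ E]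

section Taylor

variable {f : ℝ → E} {n : ℕ}

lemma norm_sub_taylorWithinEval_univ_le (hf : ContDiff ℝ n f) {x₀ x C : ℝ}
    (hC : ∀ y ∈ uIcc x₀ x, ‖iteratedDeriv n f y - iteratedDeriv n f x₀‖ ≤ C) :
    ‖f x - taylorWithinEval f n univ x₀ x‖ ≤ C * |x - x₀| ^ n := by
  induction n generalizing f x with
  | zero => simpa using hC x right_mem_uIcc
  | succ n ih =>
    have hC₀ : 0 ≤ C := (norm_nonneg _).trans (hC x₀ left_mem_uIcc)
    have hf' : ContDiff ℝ n (deriv f) := ContDiff.deriv' (mod_cast hf)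
    have hderiv (y : ℝ) : HasDerivAt (fun y ↦ f y - taylorWithinEval f (n + 1) univ x₀ y)
        (deriv f y - taylorWithinEval (deriv f) n univ x₀ y) y := by
      refine (hf.differentiable (by simp) y).hasDerivAt.sub ?_
      simpa only [derivWithin_univ] using hasDerivAt_taylorWithinEval_succ (s := univ) f n
    have hbound : ∀ y ∈ uIcc x₀ x,
        ‖deriv f y - taylorWithinEval (deriv f) n univ x₀ y‖ ≤ C * |x - x₀| ^ n := by
      intro y hy
      have hyx : |y - x₀| ≤ |x - x₀| := abs_sub_left_of_mem_uIcc hy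
      calc ‖deriv f y - taylorWithinEval (deriv f) n univ x₀ y‖
          ≤ C * |y - x₀| ^ n := ih hf' fun w hw ↦ by
            simpa only [iteratedDeriv_succ'] using hC w (uIcc_subset_uIcc_left hy hw)
        _ ≤ C * |x - x₀| ^ n := by gcongr
    have hmvt := (convex_uIcc x₀ x).norm_image_sub_le_of_norm_hasDerivWithin_le
      (fun y _ ↦ (hderiv y).hasDerivWithinAt) hbound left_mem_uIcc right_mem_uIcc
    simpa only [taylorWithinEval_self, sub_self, sub_zero, Real.norm_eq_abs, pow_succ, mul_assoc]
      using hmvt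

lemma norm_sub_taylorWithinEval_univ_le_of_bounded (hf : ContDiff ℝ n f) {M : ℝ}
    (hM : ∀ x, ‖iteratedDeriv n f x‖ ≤ M) (x₀ x : ℝ) :
    ‖f x - taylorWithinEval f n univ x₀ x‖ ≤ 2 * M * |x - x₀| ^ n :=
  norm_sub_taylorWithinEval_univ_le hf fun y _ ↦
    (norm_sub_le_of_le (hM y) (hM x₀)).trans_eq (two_mul M).symm

lemma isLittleO_sub_taylorWithinEval_univ_of_uniformContinuous (hf : ContDiff ℝ n f)
    (hfu : UniformContinuous (iteratedDeriv n f)) :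
    (fun p : ℝ × ℝ ↦ f (p.2 + p.1) - taylorWithinEval f n univ p.2 (p.2 + p.1))
      =o[𝓝 0 ×ˢ ⊤] fun p ↦ p.1 ^ n := by
  refine isLittleO_iff.2 fun ε hε ↦ ?_
  obtain ⟨δ, hδ, hfδ⟩ := Metric.uniformContinuous_iff.1 hfu ε hε
  filter_upwards [tendsto_fst.eventually (Metric.ball_mem_nhds (0 : ℝ) hδ)] with ⟨h, u⟩ hh
  have hosc : ∀ y ∈ uIcc u (u + h), ‖iteratedDeriv n f y - iteratedDeriv n f u‖ ≤ ε := by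
    intro y hy
    have hyu : |y - u| ≤ |h| := by simpa using abs_sub_left_of_mem_uIcc hy
    rw [← dist_eq_norm]
    exact (hfδ (hyu.trans_lt (by simpa using hh))).le
  simpa using norm_sub_taylorWithinEval_univ_le hf hosc

lemma continuous_taylorWithinEval (f : ℝ → E) (n : ℕ) (s : Set ℝ) (x₀ : ℝ) :
    Continuous (taylorWithinEval f n s x₀) := by
  simp_rw [funext (taylor_within_apply f n s x₀)]
  fun_prop

end Taylor

lemma isLittleO_integral_of_dominated {ι α G : Type*} [SeminormedAddCommGroup G]
    [MeasurableSpace α] {μ : Measure α} {l : Filter ι} [l.IsCountablyGenerated]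
    {F : ι → α → E} {g : ι → G} (bound : α → ℝ)
    (hF_meas : ∀ᶠ i in l, AEStronglyMeasurable (F i) μ)
    (h_bound : ∀ᶠ i in l, ∀ᵐ a ∂μ, ‖F i a‖ ≤ bound a * ‖g i‖) (hbound_int : Integrable bound μ)
    (h_lim : ∀ᵐ a ∂μ, (fun i ↦ F i a) =o[l] g) :
    (fun i ↦ ∫ a, F i a ∂μ) =o[l] g := by
  have hlim : Tendsto (fun i ↦ ∫ a, ‖g i‖⁻¹ • F i a ∂μ) l (𝓝 0) := by
    rw [← integral_zero α E (μ := μ)]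
    refine tendsto_integral_filter_of_dominated_convergence (fun a ↦ |bound a|)
      (hF_meas.mono fun i hi ↦ hi.const_smul _) ?_ hbound_int.abs
      (h_lim.mono fun a ha ↦ ha.norm_right.tendsto_inv_smul_nhds_zero)
    filter_upwards [h_bound] with i hi
    filter_upwards [hi] with a ha
    rw [norm_smul, norm_inv, norm_norm]
    refine inv_mul_le_of_le_mul₀ (norm_nonneg _) (abs_nonneg _) (ha.trans ?_)
    rw [mul_comm]
    gcongr
    exact le_abs_self _
  have hfactor : (fun i ↦ ‖g i‖ • ∫ a, ‖g i‖⁻¹ • F i a ∂μ) =ᶠ[l] fun i ↦ ∫ a, F i a ∂μ := by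
    filter_upwards [h_bound] with i hi
    -- Where `‖g i‖ = 0`, its inverse is the junk value `0`, but the bound makes `F i` vanish a.e.
    rcases eq_or_ne ‖g i‖ 0 with hgi | hgi
    · rw [hgi, zero_smul, integral_eq_zero_of_ae]
      filter_upwards [hi] with a ha
      simpa [hgi] using ha
    · rw [integral_smul, smul_inv_smul₀ hgi]
  simpa using ((isBigO_refl (fun i ↦ ‖g i‖) l).smul_isLittleO ((isLittleO_one_iff ℝ).2 hlim)).congr'
    hfactor .rfl

section Kernel

variable {μ : Measure ℝ} {k : ℝ → ℝ} {f : ℝ → E} {s : ℕ}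

lemma integrable_pow_mul_of_le (hk : Integrable k μ)
    (hks : Integrable (fun z ↦ |z| ^ s * |k z|) μ) {j : ℕ} (hj : j ≤ s) :
    Integrable (fun z ↦ z ^ j * k z) μ := by
  refine (hk.abs.add hks).mono' (by fun_prop) (.of_forall fun z ↦ ?_)
  have hpow : |z| ^ j ≤ 1 + |z| ^ s := by
    rcases le_total |z| 1 with hz | hz
    · exact (pow_le_one₀ (abs_nonneg z) hz).trans (le_add_of_nonneg_right (by positivity))
    · exact (pow_le_pow_right₀ hz hj).trans (le_add_of_nonneg_left zero_le_one)
  calc ‖z ^ j * k z‖ = |z| ^ j * |k z| := by simp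
    _ ≤ (1 + |z| ^ s) * |k z| := by gcongr
    _ = |k z| + |z| ^ s * |k z| := by ring

lemma smul_taylorWithinEval_univ_eq_sum (f : ℝ → E) (n : ℕ) (c h u z : ℝ) :
    c • taylorWithinEval f n univ u (u + h * z) =
      ∑ j ∈ Finset.range (n + 1), (z ^ j * c) • (h ^ j / j !) • iteratedDeriv j f u := by
  simp only [taylor_within_apply, iteratedDerivWithin_univ, add_sub_cancel_left, Finset.smul_sum,
    smul_smul]
  refine Finset.sum_congr rfl fun j _ ↦ ?_
  congr 1
  ring

lemma integrable_smul_taylorWithinEval_univ (hk : Integrable k μ)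
    (hks : Integrable (fun z ↦ |z| ^ s * |k z|) μ) (f : ℝ → E) (h u : ℝ) :
    Integrable (fun z ↦ k z • taylorWithinEval f s univ u (u + h * z)) μ := by
  simp_rw [smul_taylorWithinEval_univ_eq_sum]
  exact integrable_finsetSum _ fun j hj ↦
    (integrable_pow_mul_of_le hk hks (Finset.mem_range_succ_iff.1 hj)).smul_const _

lemma integral_smul_taylorWithinEval_univ [CompleteSpace E] (hk : Integrable k μ)
    (hks : Integrable (fun z ↦ |z| ^ s * |k z|) μ) (f : ℝ → E) (h u : ℝ) :
    ∫ z, k z • taylorWithinEval f s univ u (u + h * z) ∂μ =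
      ∑ j ∈ Finset.range (s + 1), (∫ z, z ^ j * k z ∂μ) • (h ^ j / j !) • iteratedDeriv j f u := by
  simp_rw [smul_taylorWithinEval_univ_eq_sum]
  rw [integral_finsetSum _ fun j hj ↦
    (integrable_pow_mul_of_le hk hks (Finset.mem_range_succ_iff.1 hj)).smul_const _]
  simp_rw [integral_smul_const]

lemma norm_smul_sub_taylorWithinEval_univ_le (hf : ContDiff ℝ s f) {M : ℝ}
    (hM : ∀ x, ‖iteratedDeriv s f x‖ ≤ M) (c h u z : ℝ) :
    ‖c • (f (u + h * z) - taylorWithinEval f s univ u (u + h * z))‖ ≤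
      2 * M * (|z| ^ s * |c|) * ‖h ^ s‖ := by
  calc ‖c • (f (u + h * z) - taylorWithinEval f s univ u (u + h * z))‖
      = |c| * ‖f (u + h * z) - taylorWithinEval f s univ u (u + h * z)‖ := norm_smul _ _
    _ ≤ |c| * (2 * M * |u + h * z - u| ^ s) := by
        gcongr
        exact norm_sub_taylorWithinEval_univ_le_of_bounded hf hM u _
    _ = 2 * M * (|z| ^ s * |c|) * ‖h ^ s‖ := by
        rw [add_sub_cancel_left, abs_mul, mul_pow, norm_pow, Real.norm_eq_abs]
        ring

lemma aestronglyMeasurable_smul_sub_taylorWithinEval_univ (hk : AEStronglyMeasurable k μ)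
    (hf : Continuous f) (s : ℕ) (h u : ℝ) : AEStronglyMeasurable
      (fun z ↦ k z • (f (u + h * z) - taylorWithinEval f s univ u (u + h * z))) μ := by
  have := continuous_taylorWithinEval f s univ u
  exact hk.smul (Continuous.aestronglyMeasurable (by fun_prop))

lemma integrable_smul_sub_taylorWithinEval_univ (hf : ContDiff ℝ s f) {M : ℝ}
    (hM : ∀ x, ‖iteratedDeriv s f x‖ ≤ M) (hk : AEStronglyMeasurable k μ)
    (hks : Integrable (fun z ↦ |z| ^ s * |k z|) μ) (h u : ℝ) :
    Integrable (fun z ↦ k z • (f (u + h * z) - taylorWithinEval f s univ u (u + h * z))) μ :=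
  ((hks.const_mul (2 * M)).mul_const ‖h ^ s‖).mono'
    (aestronglyMeasurable_smul_sub_taylorWithinEval_univ hk hf.continuous s h u)
    (.of_forall fun z ↦ norm_smul_sub_taylorWithinEval_univ_le hf hM (k z) h u z)

lemma isLittleO_integral_smul_sub_taylorWithinEval_univ (hf : ContDiff ℝ s f) {M : ℝ}
    (hM : ∀ x, ‖iteratedDeriv s f x‖ ≤ M) (hfu : UniformContinuous (iteratedDeriv s f))
    (hk : AEStronglyMeasurable k μ) (hks : Integrable (fun z ↦ |z| ^ s * |k z|) μ) :
    (fun p : ℝ × ℝ ↦ ∫ z,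
        k z • (f (p.2 + p.1 * z) - taylorWithinEval f s univ p.2 (p.2 + p.1 * z)) ∂μ)
      =o[𝓝 0 ×ˢ ⊤] fun p ↦ p.1 ^ s := by
  refine isLittleO_integral_of_dominated (fun z ↦ 2 * M * (|z| ^ s * |k z|))
    (.of_forall fun p ↦
      aestronglyMeasurable_smul_sub_taylorWithinEval_univ hk hf.continuous s p.1 p.2)
    (.of_forall fun p ↦ .of_forall fun z ↦
      norm_smul_sub_taylorWithinEval_univ_le hf hM (k z) p.1 p.2 z)
    (hks.const_mul _) (.of_forall fun z ↦ ?_)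
  have hscale : Tendsto (fun p : ℝ × ℝ ↦ (p.1 * z, p.2)) (𝓝 0 ×ˢ ⊤) (𝓝 0 ×ˢ ⊤) :=
    Tendsto.prodMap (by simpa using (continuous_mul_const z).tendsto 0) tendsto_id
  have hpow : (fun p : ℝ × ℝ ↦ (p.1 * z) ^ s) =O[𝓝 0 ×ˢ ⊤] fun p ↦ p.1 ^ s := by
    simp_rw [mul_pow, mul_comm _ (z ^ s)]
    exact isBigO_const_mul_self _ _ _
  exact (((isLittleO_sub_taylorWithinEval_univ_of_uniformContinuous hf hfu).comp_tendsto
    hscale).trans_isBigO hpow).const_smul_left (k z)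

theorem isLittleO_integral_smul_sub_sum_moments [CompleteSpace E] (hf : ContDiff ℝ s f)
    {M : ℝ} (hM : ∀ x, ‖iteratedDeriv s f x‖ ≤ M) (hfu : UniformContinuous (iteratedDeriv s f))
    (hk : Integrable k μ) (hks : Integrable (fun z ↦ |z| ^ s * |k z|) μ) :
    (fun p : ℝ × ℝ ↦ ∫ z, k z • f (p.2 + p.1 * z) ∂μ -
        ∑ j ∈ Finset.range (s + 1),
          (∫ z, z ^ j * k z ∂μ) • (p.1 ^ j / j !) • iteratedDeriv j f p.2)
      =o[𝓝 0 ×ˢ ⊤] fun p ↦ p.1 ^ s := by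
  have hk_meas := hk.aestronglyMeasurable
  refine (isLittleO_integral_smul_sub_taylorWithinEval_univ hf hM hfu hk_meas hks).congr_left
    fun ⟨h, u⟩ ↦ ?_
  have hsplit := integral_add (integrable_smul_sub_taylorWithinEval_univ hf hM hk_meas hks h u)
    (integrable_smul_taylorWithinEval_univ hk hks f h u)
  simp only [← smul_add, sub_add_cancel] at hsplit
  rw [hsplit, integral_smul_taylorWithinEval_univ hk hks, add_sub_cancel_right]

end Kernel

theorem stmt_2_general [CompleteSpace E] (μ : Measure ℝ) (s : ℕ) (f : ℝ → E) (k : ℝ → ℝ)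
    (hf : ContDiff ℝ s f)
    (hfb : ∃ M : ℝ, ∀ x, ‖iteratedDeriv s f x‖ ≤ M)
    (hfu : UniformContinuous (iteratedDeriv s f))
    (hk : Integrable k μ)
    (hk1 : ∫ z, k z ∂μ = 1)
    (hkmom : ∀ j, 1 ≤ j → j ≤ s → ∫ z, z ^ j * k z ∂μ = 0)
    (hks : Integrable (fun z ↦ |z| ^ s * |k z|) μ) :
    ∀ ε > 0, ∃ δ > 0, ∀ h : ℝ, |h| < δ → ∀ u : ℝ,
      ‖∫ z, k z • f (u + h * z) ∂μ - f u‖ ≤ ε * |h| ^ s := by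
  intro ε hε
  obtain ⟨M, hM⟩ := hfb
  have hsum (h u : ℝ) : ∑ j ∈ Finset.range (s + 1),
      (∫ z, z ^ j * k z ∂μ) • (h ^ j / j !) • iteratedDeriv j f u = f u := by
    rw [Finset.sum_range_succ', Finset.sum_eq_zero, zero_add]
    · simp [hk1]
    · intro j hj
      rw [hkmom (j + 1) (by omega) (Finset.mem_range.1 hj), zero_smul]
  have hexp := isLittleO_integral_smul_sub_sum_moments hf hM hfu hk hks
  simp only [hsum] at hexp
  have huniform := eventually_prod_principal_iff.1 (principal_univ ▸ hexp.bound hε)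
  obtain ⟨δ, hδ, hbias⟩ := Metric.eventually_nhds_iff.1 huniform
  exact ⟨δ, hδ, fun h hh u ↦ by simpa using hbias (by simpa using hh) u (mem_univ u)⟩

end SmoothingBias

/-- Under vanishing kernel moments up to order s and uniform continuity of the
s-th derivative of f (with f^{(j)} bounded for j ≤ s), the kernel-smoothing bias
∫ k(z) f(u+hz) dz − f(u) is o(h^s) uniformly in u ∈ ℝ as h → 0⁺. -/
theorem stmt_2 (s : ℕ) (hs : 1 ≤ s) (f k : ℝ → ℝ)
    (hf : ContDiff ℝ s f)
    (hfb : ∀ j ≤ s, ∃ M : ℝ, ∀ x, |iteratedDeriv j f x| ≤ M)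
    (hfu : UniformContinuous (iteratedDeriv s f))
    (hk : Integrable k)
    (hk1 : (∫ z, k z) = 1)
    (hkmom : ∀ j, 1 ≤ j → j ≤ s → (∫ z, z ^ j * k z) = 0)
    (hks : Integrable (fun z => |z| ^ s * |k z|)) :
    ∀ ε > 0, ∃ δ > 0, ∀ h : ℝ, 0 < h → h < δ → ∀ u : ℝ,
      |(∫ z, k z * f (u + h * z)) - f u| ≤ ε * h ^ s := by
  intro ε hε
  obtain ⟨δ, hδ, hbias⟩ :=
    stmt_2_general volume s f k hf (hfb s le_rfl) hfu hk hk1 hkmom hks ε hε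
  exact ⟨δ, hδ, fun h hpos hlt ↦ by simpa [abs_of_pos hpos, hlt] using hbias h⟩
end

section
/- Let k : ℝ → ℝ be integrable and f : ℝ → ℝ a probability density with cumulative distribution function F(a) = ∫_{−∞}^a f(y) dy. Set K̄(u) = ∫_{−∞}^u k(v) dv and K*(z) = 2 k(z) K̄(z). Then for every a ∈ ℝ and h > 0, ∫_ℝ K̄((a−y)/h)² f(y) dy = ∫_ℝ K*(z) F(a − hz) dz, and both integrals are absolutely convergent. -/
open MeasureTheory Set

/-!
Write `G u` for the integral of `g` over `(-∞, u]`. By Fubini on the square `(-∞, u]²`, which the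
null diagonal cuts into two triangles of equal weight under the symmetric integrand `g z * g v`,
`G u ^ 2` is the integral of `2 * g * G` over `(-∞, u]`: `K*` is a density of `K̄ ^ 2`, although `k`
need not be continuous anywhere. Both sides of the identity are then the integral of `K* z • f y`
over the half-plane `z ≤ (a - y) / h`, that is, `y ≤ a - h * z`.
-/

section SetIntegralSection

variable {α β 𝕜 E : Type*} [MeasurableSpace α] [MeasurableSpace β] {μ : Measure α} {ν : Measure β}
  [RCLike 𝕜] [NormedAddCommGroup E] [NormedSpace ℝ E] [NormedSpace 𝕜 E]
  {g : α → 𝕜} {f : β → E} {S : Set (α × β)}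

lemma integral_indicator_smul_prodMk_left (hS : MeasurableSet S) (x : α) :
    ∫ y, S.indicator (fun p ↦ g p.1 • f p.2) (x, y) ∂ν =
      g x • ∫ y in {y | (x, y) ∈ S}, f y ∂ν := by
  have hx : MeasurableSet {y | (x, y) ∈ S} := measurable_prodMk_left hS
  rw [← integral_smul, ← integral_indicator hx]
  rfl

lemma integral_indicator_smul_prodMk_right [CompleteSpace E] (hS : MeasurableSet S) (y : β) :
    ∫ x, S.indicator (fun p ↦ g p.1 • f p.2) (x, y) ∂μ =
      (∫ x in {x | (x, y) ∈ S}, g x ∂μ) • f y := by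
  have hy : MeasurableSet {x | (x, y) ∈ S} := measurable_prodMk_right hS
  rw [← integral_smul_const, ← integral_indicator hy]
  rfl

lemma integrable_smul_setIntegral_section [SFinite ν] (hg : Integrable g μ) (hf : Integrable f ν)
    (hS : MeasurableSet S) : Integrable (fun x ↦ g x • ∫ y in {y | (x, y) ∈ S}, f y ∂ν) μ := by
  simpa only [integral_indicator_smul_prodMk_left hS] using
    ((hg.smul_prod hf).indicator hS).integral_prod_left

variable [SFinite μ] [SFinite ν] [CompleteSpace E]

lemma integrable_setIntegral_section_smul (hg : Integrable g μ) (hf : Integrable f ν)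
    (hS : MeasurableSet S) : Integrable (fun y ↦ (∫ x in {x | (x, y) ∈ S}, g x ∂μ) • f y) ν := by
  simpa only [integral_indicator_smul_prodMk_right hS] using
    ((hg.smul_prod hf).indicator hS).integral_prod_right

lemma integral_setIntegral_section_smul (hg : Integrable g μ) (hf : Integrable f ν)
    (hS : MeasurableSet S) :
    ∫ y, (∫ x in {x | (x, y) ∈ S}, g x ∂μ) • f y ∂ν =
      ∫ x, g x • ∫ y in {y | (x, y) ∈ S}, f y ∂ν ∂μ := by
  simpa only [integral_indicator_smul_prodMk_left hS, integral_indicator_smul_prodMk_right hS] using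
    (integral_integral_swap (f := fun x y ↦ S.indicator (fun p ↦ g p.1 • f p.2) (x, y))
      ((hg.smul_prod hf).indicator hS)).symm

end SetIntegralSection

section Primitive

variable {α 𝕜 : Type*} [LinearOrder α] [TopologicalSpace α] [OrderClosedTopology α]
  [SecondCountableTopology α] [MeasurableSpace α] [OpensMeasurableSpace α] [RCLike 𝕜]
  {μ : Measure α} [SFinite μ] {g : α → 𝕜}

lemma integrable_mul_setIntegral_Iic (hg : Integrable g μ) :
    Integrable (fun z ↦ g z * ∫ v in Iic z, g v ∂μ) μ :=
  integrable_smul_setIntegral_section hg hg (measurableSet_le measurable_snd measurable_fst)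

lemma integrable_setIntegral_Ici_mul (hg : Integrable g μ) :
    Integrable (fun v ↦ (∫ z in Ici v, g z ∂μ) * g v) μ :=
  integrable_setIntegral_section_smul hg hg (measurableSet_le measurable_snd measurable_fst)

lemma integral_setIntegral_Ici_mul (hg : Integrable g μ) :
    ∫ v, (∫ z in Ici v, g z ∂μ) * g v ∂μ = ∫ z, g z * ∫ v in Iic z, g v ∂μ ∂μ :=
  integral_setIntegral_section_smul hg hg (measurableSet_le measurable_snd measurable_fst)

variable [NullSingletonClass μ]

lemma sq_integral_eq_integral_two_mul_setIntegral_Iic (hg : Integrable g μ) :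
    (∫ z, g z ∂μ) ^ 2 = ∫ z, 2 * g z * ∫ v in Iic z, g v ∂μ ∂μ := by
  have hsplit (z : α) : (∫ v in Ici z, g v ∂μ) + ∫ v in Iic z, g v ∂μ = ∫ v, g v ∂μ := by
    rw [integral_Ici_eq_integral_Ioi, ← compl_Iic, add_comm,
      integral_add_compl measurableSet_Iic hg]
  calc (∫ z, g z ∂μ) ^ 2
      = ∫ z, ((∫ v in Ici z, g v ∂μ) * g z + g z * ∫ v in Iic z, g v ∂μ) ∂μ := by
        rw [sq, ← integral_const_mul]
        congr with z
        rw [← hsplit z]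
        ring
    _ = 2 * ∫ z, g z * ∫ v in Iic z, g v ∂μ ∂μ := by
        rw [integral_add (integrable_setIntegral_Ici_mul hg) (integrable_mul_setIntegral_Iic hg),
          integral_setIntegral_Ici_mul hg, two_mul]
    _ = ∫ z, 2 * g z * ∫ v in Iic z, g v ∂μ ∂μ := by
        simp only [mul_assoc, integral_const_mul]

lemma sq_setIntegral_Iic_eq_setIntegral_two_mul (hg : Integrable g μ) (u : α) :
    (∫ z in Iic u, g z ∂μ) ^ 2 = ∫ z in Iic u, 2 * g z * ∫ v in Iic z, g v ∂μ ∂μ := by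
  rw [sq_integral_eq_integral_two_mul_setIntegral_Iic hg.restrict]
  refine setIntegral_congr_fun measurableSet_Iic fun z hz ↦ ?_
  simp only [Measure.restrict_restrict_of_subset (Iic_subset_Iic.2 hz)]

end Primitive

/-- With `f = 1` and `ν` the law of `Y`, this covers a random variable `Y` without a density. -/
theorem stmt_5_general {𝕜 E : Type*} [RCLike 𝕜] [NormedAddCommGroup E] [NormedSpace ℝ E]
    [NormedSpace 𝕜 E] [CompleteSpace E] {μ ν : Measure ℝ} [SFinite μ] [NullSingletonClass μ]
    [SFinite ν] {k : ℝ → 𝕜} {f : ℝ → E} (hk : Integrable k μ) (hf : Integrable f ν)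
    {F : ℝ → E} (hF : ∀ a, F a = ∫ y in Iic a, f y ∂ν)
    {Kbar : ℝ → 𝕜} (hKbar : ∀ u, Kbar u = ∫ v in Iic u, k v ∂μ)
    {Kstar : ℝ → 𝕜} (hKstar : ∀ z, Kstar z = 2 * k z * Kbar z) (a : ℝ) {h : ℝ} (hh : 0 < h) :
    Integrable (fun y ↦ Kbar ((a - y) / h) ^ 2 • f y) ν ∧
      Integrable (fun z ↦ Kstar z • F (a - h * z)) μ ∧
      ∫ y, Kbar ((a - y) / h) ^ 2 • f y ∂ν = ∫ z, Kstar z • F (a - h * z) ∂μ := by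
  have hKstar_int : Integrable Kstar μ := by
    simpa only [← hKbar, ← mul_assoc, ← hKstar] using
      (integrable_mul_setIntegral_Iic hk).const_mul 2
  let halfPlane : Set (ℝ × ℝ) := {p | p.2 ≤ a - h * p.1}
  have hhalfPlane : MeasurableSet halfPlane := measurableSet_le measurable_snd (by fun_prop)
  have hF_section (z : ℝ) : F (a - h * z) = ∫ y in {y | (z, y) ∈ halfPlane}, f y ∂ν := hF _
  have hKbar_section (y : ℝ) :
      Kbar ((a - y) / h) ^ 2 = ∫ z in {z | (z, y) ∈ halfPlane}, Kstar z ∂μ := by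
    have hsection : {z | (z, y) ∈ halfPlane} = Iic ((a - y) / h) := by
      ext z
      simp only [halfPlane, mem_ofPred_eq, mem_Iic, le_div_iff₀' hh, le_sub_comm]
    simp only [hsection, hKstar, hKbar, sq_setIntegral_Iic_eq_setIntegral_two_mul hk]
  simp only [hF_section, hKbar_section]
  exact ⟨integrable_setIntegral_section_smul hKstar_int hf hhalfPlane,
    integrable_smul_setIntegral_section hKstar_int hf hhalfPlane,
    integral_setIntegral_section_smul hKstar_int hf hhalfPlane⟩

/-- Second-moment identity for the smoothed indicator: with K̄(u) = ∫_{−∞}^u k and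
K*(z) = 2 k(z) K̄(z), one has ∫ K̄((a−y)/h)² f(y) dy = ∫ K*(z) F(a − hz) dz, with
both integrals absolutely convergent. -/
theorem stmt_5 (k f : ℝ → ℝ) (hk : Integrable k)
    (hf0 : ∀ y, 0 ≤ f y) (hfi : Integrable f) (hf1 : (∫ y, f y) = 1)
    (F : ℝ → ℝ) (hF : ∀ a, F a = ∫ y in Set.Iic a, f y)
    (Kbar : ℝ → ℝ) (hKbar : ∀ u, Kbar u = ∫ v in Set.Iic u, k v)
    (Kstar : ℝ → ℝ) (hKstar : ∀ z, Kstar z = 2 * k z * Kbar z) :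
    ∀ (a h : ℝ), 0 < h →
      Integrable (fun y => (Kbar ((a - y) / h)) ^ 2 * f y) ∧
      Integrable (fun z => Kstar z * F (a - h * z)) ∧
      (∫ y, (Kbar ((a - y) / h)) ^ 2 * f y) = ∫ z, Kstar z * F (a - h * z) :=
  fun a _ hh ↦ stmt_5_general hk hfi hF hKbar hKstar a hh
end

section
/- Let τ ∈ (0,1), h > 0, and let k : ℝ → ℝ be continuous and integrable with ∫_ℝ k(v) dv = 1 and ∫_ℝ |v k(v)| dv < ∞. Set K̄(u) = ∫_{−∞}^u k(v) dv, k_h(v) = h^{−1} k(v/h), and define the smoothed check loss ℓ_h(u; τ) = ∫_ℝ ρ_τ(v) k_h(v − u) dv. Then ℓ_h(·; τ) is finite everywhere and twice continuously differentiable on ℝ, with first derivative (d/du) ℓ_h(u; τ) = τ − K̄(−u/h) and second derivative (d²/du²) ℓ_h(u; τ) = h^{−1} k(−u/h). -/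
open MeasureTheory Set

/-- The quantile check function ρ_τ(u) = u(τ − 1{u<0}). -/
noncomputable def checkLoss (τ u : ℝ) : ℝ := u * (τ - if u < 0 then 1 else 0)

/-! Substituting `v = u + w` moves the dependence on `u` from the kernel to the check function:
`∫ ρ_τ(v) κ(v - u) dv = ∫ ρ_τ(u + w) κ(w) dw`. Since `ρ_τ` is Lipschitz, hence differentiable
almost everywhere, dominated convergence allows differentiation under the integral sign for every
integrable `κ` with integrable first moment. As `ρ_τ'(u + w) = τ - 1{w < -u}` for `w ≠ -u`, the
derivative is `τ ∫ κ - ∫_{w ≤ -u} κ(w) dw`, which the fundamental theorem of calculus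
differentiates once more. For `κ = k_h` the change of variables `w = h v` turns the last integral
into `K̄(-u / h)`. -/

section LipschitzIntegrand

variable {C : NNReal} {f κ : ℝ → ℝ}

theorem integrable_mul_of_lipschitzWith (hf : LipschitzWith C f) (hκ : Integrable κ)
    (hmoment : Integrable fun w => w * κ w) : Integrable fun w => f w * κ w := by
  refine ((hκ.norm.const_mul |f 0|).add (hmoment.norm.const_mul C)).mono'
    (hf.continuous.aestronglyMeasurable.mul hκ.aestronglyMeasurable) (ae_of_all _ fun w => ?_)
  have growth : |f w| ≤ |f 0| + C * |w| := by
    have hdist : |f w - f 0| ≤ C * |w| := by simpa [Real.dist_eq] using hf.dist_le_mul w 0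
    linarith [abs_sub_abs_le_abs_sub (f w) (f 0)]
  calc ‖f w * κ w‖ = |f w| * ‖κ w‖ := norm_mul _ _
    _ ≤ (|f 0| + C * |w|) * ‖κ w‖ := by gcongr
    _ = |f 0| * ‖κ w‖ + C * ‖w * κ w‖ := by rw [norm_mul, Real.norm_eq_abs w]; ring

theorem hasDerivAt_integral_comp_add_mul_of_lipschitzWith (hf : LipschitzWith C f)
    (hκ : Integrable κ) {u : ℝ} (hfκ : Integrable fun w => f (u + w) * κ w) :
    HasDerivAt (fun x => ∫ w, f (x + w) * κ w) (∫ w, deriv f (u + w) * κ w) u := by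
  have hmeas (x : ℝ) : AEStronglyMeasurable (fun w => f (x + w) * κ w) :=
    (hf.continuous.comp (continuous_const_add x)).aestronglyMeasurable.mul hκ.aestronglyMeasurable
  have hderiv_meas : AEStronglyMeasurable fun w => deriv f (u + w) * κ w :=
    ((measurable_deriv f).comp (measurable_const_add u)).aestronglyMeasurable.mul
      hκ.aestronglyMeasurable
  have hlip (w : ℝ) : LipschitzOnWith (Real.nnabs (C * |κ w|)) (fun x => f (x + w) * κ w) univ := by
    refine LipschitzOnWith.of_dist_le_mul fun x _ y _ => ?_
    have hdist : |f (x + w) - f (y + w)| ≤ C * |x - y| := by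
      simpa [Real.dist_eq] using hf.dist_le_mul (x + w) (y + w)
    calc dist (f (x + w) * κ w) (f (y + w) * κ w) = |f (x + w) - f (y + w)| * |κ w| := by
          rw [Real.dist_eq, ← sub_mul, abs_mul]
      _ ≤ C * |x - y| * |κ w| := by gcongr
      _ = Real.nnabs (C * |κ w|) * dist x y := by simp [Real.dist_eq]; ring
  have hdiff : ∀ᵐ w, DifferentiableAt ℝ f (u + w) :=
    (measurePreserving_add_left volume u).quasiMeasurePreserving.ae hf.ae_differentiableAt_real
  refine (hasDerivAt_integral_of_dominated_loc_of_lip Filter.univ_mem (.of_forall hmeas) hfκ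
    hderiv_meas (ae_of_all _ hlip) (hκ.abs.const_mul (C : ℝ)) ?_).2
  filter_upwards [hdiff] with w hw
  exact (hw.hasDerivAt.comp_add_const u w).mul_const (κ w)

end LipschitzIntegrand

section Calculus

theorem hasDerivAt_integral_Iic {E : Type*} [NormedAddCommGroup E] [NormedSpace ℝ E]
    [CompleteSpace E] {f : ℝ → E} (hf : Integrable f) {x : ℝ} (hfx : ContinuousAt f x) :
    HasDerivAt (fun y => ∫ v in Iic y, f v) (f x) x := by
  have hsplit : (fun y => ∫ v in Iic y, f v) =
      fun y => (∫ v in Iic x, f v) + ∫ v in x..y, f v := by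
    funext y
    rw [← intervalIntegral.integral_Iic_sub_Iic hf.integrableOn hf.integrableOn, add_sub_cancel]
  rw [hsplit]
  exact (intervalIntegral.integral_hasDerivAt_right hf.intervalIntegrable
    hf.aestronglyMeasurable.stronglyMeasurableAtFilter hfx).const_add _

theorem contDiff_two_of_hasDerivAt {𝕜 F : Type*} [NontriviallyNormedField 𝕜]
    [NormedAddCommGroup F] [NormedSpace 𝕜 F] {f f' f'' : 𝕜 → F}
    (hf : ∀ x, HasDerivAt f (f' x) x) (hf' : ∀ x, HasDerivAt f' (f'' x) x)
    (hf'' : Continuous f'') : ContDiff 𝕜 2 f := by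
  have hC1 : ContDiff 𝕜 1 f' :=
    contDiff_one_iff_deriv.2
      ⟨fun x => (hf' x).differentiableAt, by rwa [funext fun x => (hf' x).deriv]⟩
  rw [← one_add_one_eq_two, contDiff_succ_iff_deriv]
  exact ⟨fun x => (hf x).differentiableAt, by simp, by rwa [funext fun x => (hf x).deriv]⟩

end Calculus

section CheckLoss

theorem checkLoss_eq_add_max (τ x : ℝ) : checkLoss τ x = τ * x + max (-x) 0 := by
  unfold checkLoss
  split_ifs with hx
  · rw [max_eq_left (by linarith)]; ring
  · rw [max_eq_right (by linarith)]; ring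

theorem lipschitzWith_checkLoss (τ : ℝ) : LipschitzWith (‖τ‖₊ + 1) (checkLoss τ) := by
  rw [funext (checkLoss_eq_add_max τ)]
  exact (lipschitzWith_smul τ).add (LipschitzWith.id.neg.max_const 0)

theorem deriv_checkLoss (τ : ℝ) {x : ℝ} (hx : x ≠ 0) :
    deriv (checkLoss τ) x = τ - if x < 0 then 1 else 0 := by
  have hlocal : checkLoss τ =ᶠ[nhds x] fun y => y * (τ - if x < 0 then 1 else 0) := by
    rcases hx.lt_or_gt with hneg | hpos
    · filter_upwards [Iio_mem_nhds hneg] with y (hy : y < 0)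
      rw [checkLoss, if_pos hy, if_pos hneg]
    · filter_upwards [Ioi_mem_nhds hpos] with y (hy : 0 < y)
      rw [checkLoss, if_neg hy.not_gt, if_neg hpos.not_gt]
  rw [hlocal.deriv_eq, deriv_mul_const_field, deriv_id'', one_mul]

theorem integral_deriv_checkLoss_mul (τ u : ℝ) {κ : ℝ → ℝ} (hκ : Integrable κ) :
    ∫ w, deriv (checkLoss τ) (u + w) * κ w = τ * (∫ w, κ w) - ∫ w in Iic (-u), κ w := by
  have hae : (fun w => deriv (checkLoss τ) (u + w) * κ w) =ᵐ[volume]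
      fun w => τ * κ w - (Iio (-u)).indicator κ w := by
    filter_upwards [Measure.ae_ne volume (-u)] with w hw
    have hne : u + w ≠ 0 := fun h => hw (by linarith)
    have hiff : u + w < 0 ↔ w < -u := lt_neg_iff_add_neg'.symm
    simp only [deriv_checkLoss τ hne, hiff, indicator_apply, mem_Iio]
    split_ifs <;> ring
  rw [integral_congr_ae hae, integral_sub (hκ.const_mul τ) (hκ.indicator measurableSet_Iio),
    integral_const_mul, integral_indicator measurableSet_Iio, integral_Iic_eq_integral_Iio]

end CheckLoss

section Smoothing

/-- The check loss smoothed by an arbitrary kernel `κ`, `u ↦ ∫ ρ_τ(v) κ(v - u) dv`. The paper's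
`ℓ_h` is the case `κ = scaledKernel h k`. -/
noncomputable def smoothedCheckLoss (τ : ℝ) (κ : ℝ → ℝ) (u : ℝ) : ℝ :=
  ∫ v, checkLoss τ v * κ (v - u)

variable {κ : ℝ → ℝ}

theorem smoothedCheckLoss_eq_integral_comp_add (τ : ℝ) (κ : ℝ → ℝ) (u : ℝ) :
    smoothedCheckLoss τ κ u = ∫ w, checkLoss τ (u + w) * κ w := by
  simpa only [smoothedCheckLoss, add_sub_cancel] using
    integral_sub_right_eq_self (μ := volume) (fun w => checkLoss τ (u + w) * κ w) u

theorem integrable_checkLoss_comp_add_mul (τ u : ℝ) (hκ : Integrable κ)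
    (hmoment : Integrable fun w => w * κ w) :
    Integrable fun w => checkLoss τ (u + w) * κ w :=
  integrable_mul_of_lipschitzWith
    ((lipschitzWith_checkLoss τ).comp (isometry_add_left u).lipschitz) hκ hmoment

theorem integrable_checkLoss_mul_comp_sub (τ u : ℝ) (hκ : Integrable κ)
    (hmoment : Integrable fun w => w * κ w) :
    Integrable fun v => checkLoss τ v * κ (v - u) := by
  simpa only [add_sub_cancel] using
    (integrable_checkLoss_comp_add_mul τ u hκ hmoment).comp_sub_right u

theorem hasDerivAt_smoothedCheckLoss (τ u : ℝ) (hκ : Integrable κ)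
    (hmoment : Integrable fun w => w * κ w) :
    HasDerivAt (smoothedCheckLoss τ κ) (τ * (∫ w, κ w) - ∫ w in Iic (-u), κ w) u := by
  rw [funext (smoothedCheckLoss_eq_integral_comp_add τ κ), ← integral_deriv_checkLoss_mul τ u hκ]
  exact hasDerivAt_integral_comp_add_mul_of_lipschitzWith (lipschitzWith_checkLoss τ) hκ
    (integrable_checkLoss_comp_add_mul τ u hκ hmoment)

theorem hasDerivAt_const_sub_integral_Iic_neg (c : ℝ) (hκ : Integrable κ) {u : ℝ}
    (hκu : ContinuousAt κ (-u)) :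
    HasDerivAt (fun x => c - ∫ w in Iic (-x), κ w) (κ (-u)) u := by
  simpa using ((hasDerivAt_integral_Iic hκ hκu).scomp u (hasDerivAt_neg u)).const_sub c

end Smoothing

section ScaledKernel

/-- The kernel `k_h(v) = h⁻¹ k(v / h)` with bandwidth `h`. -/
noncomputable def scaledKernel (h : ℝ) (k : ℝ → ℝ) (v : ℝ) : ℝ := (1 / h) * k (v / h)

variable {h : ℝ} {k : ℝ → ℝ}

theorem continuous_scaledKernel (h : ℝ) (hk : Continuous k) : Continuous (scaledKernel h k) :=
  continuous_const.mul (hk.comp (continuous_id.div_const h))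

theorem integrable_scaledKernel (hh : h ≠ 0) (hk : Integrable k) :
    Integrable (scaledKernel h k) :=
  (hk.comp_div hh).const_mul (1 / h)

theorem integrable_mul_scaledKernel (hh : h ≠ 0) (hmoment : Integrable fun v => v * k v) :
    Integrable fun v => v * scaledKernel h k v := by
  refine (hmoment.comp_div hh).congr (ae_of_all _ fun v => ?_)
  simp only [scaledKernel]
  ring

theorem integral_scaledKernel (hh : 0 < h) (k : ℝ → ℝ) :
    ∫ v, scaledKernel h k v = ∫ v, k v := by
  simp only [scaledKernel]
  rw [integral_const_mul, Measure.integral_comp_div, abs_of_pos hh, smul_eq_mul, ← mul_assoc,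
    one_div_mul_cancel hh.ne', one_mul]

theorem setIntegral_Iic_scaledKernel (hh : 0 < h) (k : ℝ → ℝ) (a : ℝ) :
    ∫ v in Iic a, scaledKernel h k v = ∫ v in Iic (a / h), k v := by
  have hindicator : (Iic a).indicator (scaledKernel h k) =
      scaledKernel h ((Iic (a / h)).indicator k) := by
    funext v
    simp [scaledKernel, indicator_apply, div_le_div_iff_of_pos_right hh]
  rw [← integral_indicator measurableSet_Iic, hindicator, integral_scaledKernel hh,
    integral_indicator measurableSet_Iic]

end ScaledKernel

theorem stmt_9_general (τ : ℝ) {h : ℝ} (hh : 0 < h) {k : ℝ → ℝ} (hkc : Continuous k)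
    (hk : Integrable k) (hmoment : Integrable fun v => v * k v) {Kbar : ℝ → ℝ}
    (hKbar : ∀ u, Kbar u = ∫ v in Iic u, k v) {ℓ : ℝ → ℝ}
    (hℓ : ∀ u, ℓ u = ∫ v, checkLoss τ v * ((1 / h) * k ((v - u) / h))) :
    (∀ u, Integrable (fun v => checkLoss τ v * ((1 / h) * k ((v - u) / h)))) ∧
    ContDiff ℝ 2 ℓ ∧
    (∀ u, HasDerivAt ℓ (τ * (∫ v, k v) - Kbar (-u / h)) u) ∧
    (∀ u, HasDerivAt (fun u => τ * (∫ v, k v) - Kbar (-u / h)) ((1 / h) * k (-u / h)) u) := by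
  obtain rfl : ℓ = smoothedCheckLoss τ (scaledKernel h k) := funext hℓ
  have hκ := integrable_scaledKernel hh.ne' hk
  have hκmoment := integrable_mul_scaledKernel hh.ne' hmoment
  have hκc := continuous_scaledKernel h hkc
  have hKbar_neg (u : ℝ) : Kbar (-u / h) = ∫ w in Iic (-u), scaledKernel h k w := by
    rw [hKbar, setIntegral_Iic_scaledKernel hh]
  simp only [hKbar_neg, ← integral_scaledKernel hh k]
  have hderiv (u : ℝ) := hasDerivAt_smoothedCheckLoss τ u hκ hκmoment
  have hderiv₂ (u : ℝ) := hasDerivAt_const_sub_integral_Iic_neg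
    (τ * ∫ v, scaledKernel h k v) hκ (hκc.continuousAt (x := -u))
  exact ⟨fun u => integrable_checkLoss_mul_comp_sub τ u hκ hκmoment,
    contDiff_two_of_hasDerivAt hderiv hderiv₂ (hκc.comp continuous_neg), hderiv, hderiv₂⟩

/-- The convolution-smoothed check loss ℓ_h(u; τ) = ∫ ρ_τ(v) k_h(v − u) dv is
finite everywhere and twice continuously differentiable, with
ℓ_h'(u; τ) = τ − K̄(−u/h) and ℓ_h''(u; τ) = h⁻¹ k(−u/h). -/
theorem stmt_9 (τ h : ℝ) (hτ : τ ∈ Set.Ioo (0:ℝ) 1) (hh : 0 < h)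
    (k : ℝ → ℝ) (hkc : Continuous k) (hk : Integrable k)
    (hk1 : (∫ v, k v) = 1)
    (hk2 : Integrable (fun v => |v * k v|))
    (Kbar : ℝ → ℝ) (hKbar : ∀ u, Kbar u = ∫ v in Set.Iic u, k v)
    (ℓ : ℝ → ℝ)
    (hℓ : ∀ u, ℓ u = ∫ v, checkLoss τ v * ((1 / h) * k ((v - u) / h))) :
    (∀ u, Integrable (fun v => checkLoss τ v * ((1 / h) * k ((v - u) / h)))) ∧
    ContDiff ℝ 2 ℓ ∧
    (∀ u, HasDerivAt ℓ (τ - Kbar (-u / h)) u) ∧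
    (∀ u, HasDerivAt (fun u => τ - Kbar (-u / h)) ((1 / h) * k (-u / h)) u) := by
  have hmoment := (integrable_norm_iff (continuous_id.mul hkc).aestronglyMeasurable).1 hk2
  simpa only [hk1, mul_one] using stmt_9_general τ hh hkc hk hmoment hKbar hℓ
end
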